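/- arXiv:2207.00646 — 15 statements merged into one kernel-verified Lean document; each statement's English description precedes it below -/
import Mathlib

section
/- For every real number x ≥ 1, one has 6·x^(3/4) ≥ 6·(x − x^(1/2)/2)^(3/4) + (x^(1/2)/2)^(1/2). -/
/-- Lemma 3.3 of the paper: the key recursion inequality for the
`O(|I|^(3/4))` adaptive regret bound of EFLH. -/
theorem eflh_recursion_basic (x : ℝ) (hx : 1 ≤ x) :
    6 * x ^ ((3 : ℝ) / 4) ≥
      6 * (x - x ^ ((1 : ℝ) / 2) / 2) ^ ((3 : ℝ) / 4) +
        (x ^ ((1 : ℝ) / 2) / 2) ^ ((1 : ℝ) / 2) := by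
  obtain ⟨t, ht, rfl⟩ : ∃ t : ℝ, 1 ≤ t ∧ x = t ^ 4 := by
    refine ⟨x ^ ((1 : ℝ) / 4), Real.one_le_rpow hx (by norm_num), ?_⟩
    rw [← Real.rpow_natCast, ← Real.rpow_mul (by linarith)]
    norm_num
  have h0 : 0 < t := by linarith
  have h1 : (t ^ 4) ^ ((3 : ℝ) / 4) = t ^ 3 := by
    rw [← Real.rpow_natCast, ← Real.rpow_natCast, ← Real.rpow_mul h0.le]
    norm_num
  have h2 : (t ^ 4) ^ ((1 : ℝ) / 2) = t ^ 2 := by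
    rw [← Real.rpow_natCast, ← Real.rpow_natCast, ← Real.rpow_mul h0.le]
    norm_num
  have h3 : (t ^ 2 / 2) ^ ((1 : ℝ) / 2) ≤ t := by
    rw [← Real.sqrt_eq_rpow]
    exact Real.sqrt_le_iff.mpr ⟨h0.le, by nlinarith⟩
  have hs : 1 / (2 * t ^ 2) ≤ 1 := by
    rw [div_le_one (by positivity)]; nlinarith
  have h4 : (t ^ 4 - t ^ 2 / 2) ^ ((3 : ℝ) / 4) ≤ t ^ 3 - 3 * t / 8 := by
    have e : t ^ 4 - t ^ 2 / 2 = t ^ 4 * (1 + -(1 / (2 * t ^ 2))) := by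
      field_simp
      ring
    rw [e, Real.mul_rpow (by positivity) (by linarith), h1]
    have b := rpow_one_add_le_one_add_mul_self (s := -(1 / (2 * t ^ 2))) (by linarith)
      (p := (3 : ℝ) / 4) (by norm_num) (by norm_num)
    calc _ ≤ t ^ 3 * (1 + 3 / 4 * -(1 / (2 * t ^ 2))) := by gcongr
      _ = _ := by
        field_simp
        ring
  rw [h1, h2]
  linarith
end

section
/- For every real number x ≥ 1 and every real ε with 0 < ε < 1/2, one has 8·x^((1+ε)/2) ≥ 8·(x − x^(1−ε)/2)^((1+ε)/2) + (x/2)^((1−ε)/2). -/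
/-- Lemma C.1 of the paper: the generalized recursion inequality for the
`O(|I|^((1+ε)/2))` adaptive regret bound of the full EFLH algorithm. -/
theorem eflh_recursion_general (x : ℝ) (hx : 1 ≤ x) (ε : ℝ) (hε : 0 < ε)
    (hε' : ε < 1 / 2) :
    8 * x ^ ((1 + ε) / 2) ≥
      8 * (x - x ^ (1 - ε) / 2) ^ ((1 + ε) / 2) + (x / 2) ^ ((1 - ε) / 2) := by
  have hx0 : 0 < x := by linarith
  have hu0 : 0 < x ^ (-ε) := Real.rpow_pos_of_pos hx0 _
  have hu1 : x ^ (-ε) ≤ 1 := Real.rpow_le_one_of_one_le_of_nonpos hx (by linarith)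
  have h1 : x ^ (1 - ε) = x * x ^ (-ε) := by
    rw [sub_eq_add_neg, Real.rpow_add hx0, Real.rpow_one]
  have h2 : x - x ^ (1 - ε) / 2 = x * (1 + -(x ^ (-ε) / 2)) := by rw [h1]; ring
  have h3 : (1 + -(x ^ (-ε) / 2)) ^ ((1 + ε) / 2) ≤ 1 + (1 + ε) / 2 * -(x ^ (-ε) / 2) :=
    rpow_one_add_le_one_add_mul_self (by linarith) (by linarith) (by linarith)
  have h4 : x ^ ((1 - ε) / 2) = x ^ ((1 + ε) / 2) * x ^ (-ε) := by
    rw [← Real.rpow_add hx0]; congr 1; ring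
  have h5 : (x / 2) ^ ((1 - ε) / 2) ≤ x ^ ((1 - ε) / 2) :=
    Real.rpow_le_rpow (by linarith) (by linarith) (by linarith)
  have hP : 0 < x ^ ((1 + ε) / 2) := Real.rpow_pos_of_pos hx0 _
  rw [h2, Real.mul_rpow hx0.le (by linarith)]
  have h6 := mul_le_mul_of_nonneg_left h3 hP.le
  have h7 := mul_pos hP hu0
  have h8 := mul_pos hε h7
  rw [h4] at h5
  nlinarith
end

section
/- For every real number x ≥ 1 and every real ε with 0 < ε < 1/2, one has x^((1+ε)/2) − (x − x^(1−ε)/2)^((1+ε)/2) ≥ ((1+ε)/8)·x^((1−ε)/2). -/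
/-- The main estimate in the proof of the generalized recursion inequality
(Lemma C.1) of the paper. -/
theorem eflh_recursion_estimate (x : ℝ) (hx : 1 ≤ x) (ε : ℝ) (hε : 0 < ε)
    (hε' : ε < 1 / 2) :
    x ^ ((1 + ε) / 2) - (x - x ^ (1 - ε) / 2) ^ ((1 + ε) / 2) ≥
      (1 + ε) / 8 * x ^ ((1 - ε) / 2) := by
  have hx0 : 0 < x := by linarith
  have ht0 : 0 < x ^ (-ε) := Real.rpow_pos_of_pos hx0 _
  have ht1 : x ^ (-ε) ≤ 1 := Real.rpow_le_one_of_one_le_of_nonpos hx (by linarith)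
  have h1 : x ^ (1 - ε) = x * x ^ (-ε) := by
    rw [sub_eq_add_neg, Real.rpow_add hx0, Real.rpow_one]
  have h2 : x ^ ((1 - ε) / 2) = x ^ ((1 + ε) / 2) * x ^ (-ε) := by
    rw [← Real.rpow_add hx0]; congr 1; ring
  have h3 : x - x ^ (1 - ε) / 2 = x * (1 + -(x ^ (-ε) / 2)) := by rw [h1]; ring
  have hb : (1 + -(x ^ (-ε) / 2)) ^ ((1 + ε) / 2) ≤ 1 + (1 + ε) / 2 * -(x ^ (-ε) / 2) :=
    rpow_one_add_le_one_add_mul_self (by linarith) (by linarith) (by linarith)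
  have hA : 0 < x ^ ((1 + ε) / 2) := Real.rpow_pos_of_pos hx0 _
  rw [h3, Real.mul_rpow hx0.le (by linarith), h2]
  have := mul_le_mul_of_nonneg_left hb hA.le
  have h5 : 0 < (1 + ε) * (x ^ ((1 + ε) / 2) * x ^ (-ε)) := by positivity
  nlinarith
end

section
/- For all real numbers x ≥ 1 and y with x^(1/2)/2 ≤ y ≤ x, one has 6·y^(1/2) + 36·(x − y)^(3/4) ≤ 36·x^(3/4). -/
/-- The induction-step inequality in the proof of Theorem 3.1 of the paper. -/
theorem eflh_induction_step_basic (x y : ℝ) (hx : 1 ≤ x)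
    (hy₁ : x ^ ((1 : ℝ) / 2) / 2 ≤ y) (hy₂ : y ≤ x) :
    6 * y ^ ((1 : ℝ) / 2) + 36 * (x - y) ^ ((3 : ℝ) / 4) ≤
      36 * x ^ ((3 : ℝ) / 4) := by
  have hx0 : 0 < x := by linarith
  have hxy : 0 ≤ x - y := by linarith
  have key : ∀ z : ℝ, 0 ≤ z → ∀ (n : ℕ) (p q : ℝ), p * n = q → z ^ q = (z ^ p) ^ n := by
    intro z hz n p q h
    rw [← h, Real.rpow_mul_natCast hz]
  have hy0 : 0 ≤ y := le_trans (by positivity) hy₁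
  have e1 := key x hx0.le 2 (1/4) (1/2) (by norm_num)
  have e2 := key x hx0.le 3 (1/4) (3/4) (by norm_num)
  have e3 := key x hx0.le 4 (1/4) 1 (by norm_num)
  have e4 := key (x - y) hxy 3 (1/4) (3/4) (by norm_num)
  have e5 := key (x - y) hxy 4 (1/4) 1 (by norm_num)
  have e6 := key y hy0 2 (1/2) 1 (by norm_num)
  rw [Real.rpow_one] at e3 e5 e6
  rw [e2, e4]
  rw [e1] at hy₁
  have ha : 0 < x ^ ((1:ℝ)/4) := by positivity
  have hb : 0 ≤ (x - y) ^ ((1:ℝ)/4) := by positivity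
  have hs : 0 ≤ y ^ ((1:ℝ)/2) := by positivity
  generalize x ^ ((1:ℝ)/4) = a at *
  generalize (x - y) ^ ((1:ℝ)/4) = b at *
  generalize y ^ ((1:ℝ)/2) = s at *
  have h1 : a ≤ 2 * s := abs_le_of_sq_le_sq' (by nlinarith) (by linarith) |>.2
  have h2 : 4 * (a * b ^ 3) ≤ 3 * b ^ 4 + a ^ 4 := by
    have : 3 * b ^ 4 + a ^ 4 - 4 * (a * b ^ 3) = (a - b) ^ 2 * ((a + b) ^ 2 + 2 * b ^ 2) := by ring
    have : 0 ≤ (a - b) ^ 2 * ((a + b) ^ 2 + 2 * b ^ 2) := by positivity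
    linarith
  have h3 : b ^ 4 = a ^ 4 - s ^ 2 := by linarith
  have h4 : s * a ≤ 2 * s ^ 2 := by nlinarith
  refine le_of_mul_le_mul_left ?_ ha
  nlinarith [sq_nonneg s]
end

section
/- For every real ε with 0 < ε < 1/2 and all real numbers x ≥ 1 and y with x^(1−ε)/2 ≤ y ≤ x, one has 6·y^(1/2) + 48·(x − y)^((1+ε)/2) ≤ 48·x^((1+ε)/2). -/
/-- The induction-step inequality in the proof of Theorem 4.1 of the paper. -/
theorem eflh_induction_step_general (ε : ℝ) (hε : 0 < ε) (hε' : ε < 1 / 2)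
    (x y : ℝ) (hx : 1 ≤ x) (hy₁ : x ^ (1 - ε) / 2 ≤ y) (hy₂ : y ≤ x) :
    6 * y ^ ((1 : ℝ) / 2) + 48 * (x - y) ^ ((1 + ε) / 2) ≤
      48 * x ^ ((1 + ε) / 2) := by
  have hx0 : 0 < x := by linarith
  have ha : 0 < x ^ ((1 - ε) / 2) := Real.rpow_pos_of_pos hx0 _
  have haa : x ^ ((1 - ε) / 2) * x ^ ((1 - ε) / 2) = x ^ (1 - ε) := by
    rw [← Real.rpow_add hx0]; congr 1; ring
  have hpa : x ^ ((1 + ε) / 2) * x ^ ((1 - ε) / 2) = x := by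
    rw [← Real.rpow_add hx0]
    have : (1 + ε) / 2 + (1 - ε) / 2 = 1 := by ring
    rw [this, Real.rpow_one]
  have hy0 : 0 < y := by nlinarith [mul_pos ha ha]
  have ht1 : y / x ≤ 1 := (div_le_one hx0).2 hy₂
  have hB := rpow_one_add_le_one_add_mul_self (s := -(y / x)) (p := (1 + ε) / 2)
    (by linarith) (by linarith) (by linarith)
  have hfac : (x - y) ^ ((1 + ε) / 2)
      = x ^ ((1 + ε) / 2) * (1 + -(y / x)) ^ ((1 + ε) / 2) := by
    rw [← Real.mul_rpow hx0.le (by linarith)]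
    congr 1; field_simp; ring
  rw [← Real.sqrt_eq_rpow, hfac]
  have hs := Real.sqrt_pos.2 hy0
  have hss := Real.mul_self_sqrt hy0.le
  have hP : 0 < x ^ ((1 + ε) / 2) := Real.rpow_pos_of_pos hx0 _
  have h1 := mul_le_mul_of_nonneg_left hB hP.le
  generalize x ^ ((1 + ε) / 2) = P at *
  generalize x ^ ((1 - ε) / 2) = a at *
  generalize Real.sqrt y = s at *
  have h2 : P * (y / x) = s * s / a := by
    rw [hss, ← hpa]; field_simp
  have h3 : a ≤ 4 * s := by
    by_contra h
    push Not at h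
    nlinarith
  have h4 : s ≤ 4 * (s * s / a) := by
    rw [← mul_div_assoc, le_div_iff₀ ha]
    nlinarith
  have h5 : 0 ≤ s * s / a := by positivity
  nlinarith [mul_nonneg hε.le h5]
end

section
/- For every integer t ≥ 2, the number of pairs (k, i) of positive integers such that 2^(2^k − 1) divides i, 2^(2^k + 1) does not divide i, and i ≤ t < i + 2^(2^k + 1), plus the number of odd positive integers i with i ≤ t < i + 4, is at most 4·(log₂(1 + log₂ t) + 1). -/
/-- Lemma 3.3 of the paper, made quantitative: the number of active experts of
EFLH at time `t` (experts started at times `i` divisible by `2^(2^k-1)` but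
not `2^(2^k+1)`, with lifespan `2^(2^k+1)`, together with odd starting times
with lifespan `4`) is at most `4 (log₂(1 + log₂ t) + 1)`. -/
theorem eflh_num_experts (t : ℕ) (ht : 2 ≤ t) :
    ((({p : ℕ × ℕ | 0 < p.1 ∧ 0 < p.2 ∧
          2 ^ (2 ^ p.1 - 1) ∣ p.2 ∧ ¬ 2 ^ (2 ^ p.1 + 1) ∣ p.2 ∧
          p.2 ≤ t ∧ t < p.2 + 2 ^ (2 ^ p.1 + 1)}).ncard : ℝ) +
        (({i : ℕ | Odd i ∧ 0 < i ∧ i ≤ t ∧ t < i + 4}).ncard : ℝ)) ≤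
      4 * (Real.logb 2 (1 + Real.logb 2 t) + 1) := by
  set K := Nat.log 2 (1 + Nat.log 2 t) with hK
  have h1 : ({p : ℕ × ℕ | 0 < p.1 ∧ 0 < p.2 ∧
          2 ^ (2 ^ p.1 - 1) ∣ p.2 ∧ ¬ 2 ^ (2 ^ p.1 + 1) ∣ p.2 ∧
          p.2 ≤ t ∧ t < p.2 + 2 ^ (2 ^ p.1 + 1)}).ncard ≤ K * 4 := by
    let F : Finset (ℕ × ℕ) := (Finset.Icc 1 K ×ˢ Finset.range 4).image
      (fun q => (q.1, 2 ^ (2 ^ q.1 - 1) * (t / 2 ^ (2 ^ q.1 - 1) - q.2)))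
    have hF : F.card ≤ K * 4 := by
      refine Finset.card_image_le.trans ?_
      simp
    refine le_trans ?_ hF
    rw [← Set.ncard_coe_finset]
    refine Set.ncard_le_ncard ?_ F.finite_toSet
    rintro ⟨k, i⟩ ⟨hk, hi, ⟨c, hc⟩, -, hit, hti⟩
    simp only at hk hi hc hit hti
    have hpos : 0 < 2 ^ k := by positivity
    have e4 : 2 ^ (2 ^ k + 1) = 2 ^ (2 ^ k - 1) * 4 := by
      rw [show 2 ^ k + 1 = (2 ^ k - 1) + 2 by omega, pow_add]
      norm_num
    rw [e4] at hti
    have hMle : 2 ^ (2 ^ k - 1) ≤ t := (Nat.le_of_dvd hi ⟨c, hc⟩).trans hit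
    have hlog : 2 ^ k - 1 ≤ Nat.log 2 t := Nat.le_log_of_pow_le (by norm_num) hMle
    have hkK : k ≤ K := Nat.le_log_of_pow_le (by norm_num) (by omega)
    have hMpos : 0 < 2 ^ (2 ^ k - 1) := by positivity
    have hc1 : c ≤ t / 2 ^ (2 ^ k - 1) := by
      rw [Nat.le_div_iff_mul_le hMpos, mul_comm, ← hc]
      exact hit
    have hc2 : t / 2 ^ (2 ^ k - 1) < c + 4 := by
      rw [Nat.div_lt_iff_lt_mul hMpos, mul_comm, mul_add, ← hc]
      exact hti
    simp only [F, Finset.coe_image, Set.mem_image, Finset.mem_coe, Finset.mem_product,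
      Finset.mem_Icc, Finset.mem_range]
    refine ⟨(k, t / 2 ^ (2 ^ k - 1) - c), ⟨⟨hk, hkK⟩, by simp only; omega⟩, ?_⟩
    simp only [Prod.mk.injEq, true_and]
    rw [Nat.sub_sub_self hc1, hc]
  have h2 : ({i : ℕ | Odd i ∧ 0 < i ∧ i ≤ t ∧ t < i + 4}).ncard ≤ 4 := by
    have hF : (Finset.Ioc (t - 4) t).card ≤ 4 := by
      rw [Nat.card_Ioc]
      omega
    refine le_trans ?_ hF
    rw [← Set.ncard_coe_finset]
    refine Set.ncard_le_ncard ?_ (Finset.finite_toSet _)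
    rintro i ⟨-, h0, hi, hti⟩
    simp only [Finset.coe_Ioc, Set.mem_Ioc]
    omega
  have h3 : (K : ℝ) ≤ Real.logb 2 (1 + Real.logb 2 t) := by
    have a : ((Nat.log 2 t : ℕ) : ℝ) ≤ Real.logb 2 t := by
      exact_mod_cast Real.natLog_le_logb t 2
    have b : (K : ℝ) ≤ Real.logb 2 ((1 + Nat.log 2 t : ℕ) : ℝ) := by
      exact_mod_cast Real.natLog_le_logb (1 + Nat.log 2 t) 2
    refine b.trans (Real.logb_le_logb_of_le (by norm_num) (by positivity) ?_)
    push_cast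
    linarith
  have h1' := (Nat.cast_le (α := ℝ)).2 h1
  have h2' := (Nat.cast_le (α := ℝ)).2 h2
  push_cast at h1' h2'
  linarith
end

section
/- Under the Algorithm-1 multiplicative-weights setup, suppose: expert i belongs to S_τ for every τ ∈ {i, …, t} with t + 1 ≤ T; its lifespan satisfies l_i/4 ≤ t − i ≤ l_i; and √(log T / l_i) ≤ 1/2 (so η_i = (1/(GD))·√(log T / l_i)). Then the regret of the played points against expert i's predictions satisfies ∑_{τ=i}^{t} (ℓ_τ(x_τ) − ℓ_τ(x_τ^{(i)})) ≤ 3·G·D·√(log T · (t − i)). Consequently, if the expert additionally guarantees ∑_{τ=i}^{t} ℓ_τ(x_τ^{(i)}) − min_{x ∈ K} ∑_{τ=i}^{t} ℓ_τ(x) ≤ 3·G·D·√(t − i), then ∑_{τ=i}^{t} ℓ_τ(x_τ) − min_{x ∈ K} ∑_{τ=i}^{t} ℓ_τ(x) ≤ 3·G·D·√(t − i) + 3·G·D·√(log T·(t − i)). -/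
lemma aux_log (x : ℝ) (hx : |x| ≤ 1 / 2) : x - x ^ 2 ≤ Real.log (1 + x) := by
  obtain ⟨h1, h2⟩ := abs_le.mp hx
  have hpos : 0 < 1 + x := by linarith
  rcases le_total 0 x with h | h
  · have := Real.one_sub_inv_le_log_of_pos hpos
    have h3 : x - x ^ 2 ≤ 1 - (1 + x)⁻¹ := by
      have : 1 - (1 + x)⁻¹ = x / (1 + x) := by field_simp; ring
      rw [this, le_div_iff₀ hpos]
      nlinarith [pow_nonneg h 3]
    linarith
  · have hb := Real.quadratic_le_exp_of_nonneg (x := x ^ 2 - x) (by nlinarith)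
    rw [Real.le_log_iff_exp_le hpos, show x - x ^ 2 = -(x ^ 2 - x) by ring, Real.exp_neg]
    apply inv_le_of_inv_le₀ hpos
    refine le_trans ?_ hb
    rw [inv_le_iff_one_le_mul₀ hpos]
    have : (1 + (x ^ 2 - x) + (x ^ 2 - x) ^ 2 / 2) * (1 + x) - 1
      = x ^ 2 * (1 + x - x ^ 2 + x ^ 2 * x) / 2 := by ring
    have h5 : 0 ≤ 1 + x - x ^ 2 + x ^ 2 * x := by nlinarith [sq_nonneg x, mul_nonneg (sq_nonneg x) (by linarith : 0 ≤ x + 1 / 2)]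
    nlinarith [mul_nonneg (sq_nonneg x) h5]

lemma aux_final (n l : ℝ) (hn : 1 ≤ n) (h1 : l / 4 ≤ n) (h2 : n ≤ l) :
    l + (n + 1) ≤ 3 * Real.sqrt (l * n) := by
  obtain ⟨a, ha, hal⟩ : ∃ a : ℝ, 0 ≤ a ∧ a ^ 2 = l :=
    ⟨Real.sqrt l, Real.sqrt_nonneg _, Real.sq_sqrt (by linarith)⟩
  obtain ⟨b, hb, hbn⟩ : ∃ b : ℝ, 0 ≤ b ∧ b ^ 2 = n :=
    ⟨Real.sqrt n, Real.sqrt_nonneg _, Real.sq_sqrt (by linarith)⟩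
  subst hal hbn
  rw [← mul_pow, Real.sqrt_sq (by positivity)]
  have hab : b ≤ a := abs_le_of_sq_le_sq' h2 ha |>.2
  have hab2 : a ≤ 2 * b := abs_le_of_sq_le_sq' (by nlinarith : a ^ 2 ≤ (2 * b) ^ 2) (by positivity) |>.2
  nlinarith [mul_nonneg (sub_nonneg.2 hab) (sub_nonneg.2 hab2)]

/-- Lemma 3.4 of the paper: in the Algorithm-1 multiplicative-weights setup,
the regret of the played points against an expert `i` that is alive
throughout `[i, t]`, whose lifespan matches `t - i` up to a factor of 4, is
at most `3GD√(log T · (t - i))`; consequently, if the expert itself has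
regret at most `3GD√(t - i)` against the best point of `K` on `[i, t]`, then
the algorithm's regret on `[i, t]` is at most
`3GD√(t - i) + 3GD√(log T · (t - i))`. -/
theorem eflh_mw_regret
    (d T : ℕ) (hT : 2 ≤ T)
    (G D : ℝ) (hG : 0 < G) (hD : 0 < D)
    (K : Set (EuclideanSpace ℝ (Fin d))) (hKconv : Convex ℝ K)
    (hKcomp : IsCompact K)
    (ℓ : ℕ → EuclideanSpace ℝ (Fin d) → ℝ)
    (hℓconv : ∀ τ ∈ Finset.Icc 1 T, ConvexOn ℝ K (ℓ τ))
    (hℓosc : ∀ τ ∈ Finset.Icc 1 T, ∀ u ∈ K, ∀ v ∈ K, |ℓ τ u - ℓ τ v| ≤ G * D)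
    -- active expert sets
    (S : ℕ → Finset ℕ)
    (hS_sub : ∀ τ, S τ ⊆ Finset.Icc 1 τ)
    (hS_mem : ∀ τ ∈ Finset.Icc 1 T, τ ∈ S τ)
    (hS1 : S 1 = {1})
    (hS_step : ∀ τ, S (τ + 1) ⊆ S τ ∪ {τ + 1})
    -- lifespans and learning rates
    (l : ℕ → ℝ) (hl : ∀ j, 0 < l j)
    (η : ℕ → ℝ)
    (hη : ∀ j, η j = 1 / (G * D) * min (1 / 2) (Real.sqrt (Real.log T / l j)))
    -- expert predictions
    (xp : ℕ → ℕ → EuclideanSpace ℝ (Fin d))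
    (hxp : ∀ τ, ∀ j ∈ S τ, xp τ j ∈ K)
    -- weights and played points
    (w : ℕ → ℕ → ℝ)
    (X : ℕ → EuclideanSpace ℝ (Fin d))
    (hX : ∀ τ, X τ = (∑ j ∈ S τ, w τ j)⁻¹ • ∑ j ∈ S τ, w τ j • xp τ j)
    (hw_init : ∀ j, w j j = η j)
    (hw_rec : ∀ τ, ∀ j ∈ S τ, j ∈ S (τ + 1) →
      w (τ + 1) j = w τ j * (1 + η j * (ℓ τ (X τ) - ℓ τ (xp τ j))))
    -- the expert i and the interval [i, t]
    (i t : ℕ) (hit : i ≤ t) (htT : t + 1 ≤ T)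
    (hactive : ∀ τ ∈ Finset.Icc i t, i ∈ S τ)
    (hlife_lo : l i / 4 ≤ (t : ℝ) - (i : ℝ))
    (hlife_hi : (t : ℝ) - (i : ℝ) ≤ l i)
    (hη_small : Real.sqrt (Real.log T / l i) ≤ 1 / 2) :
    (∑ τ ∈ Finset.Icc i t, (ℓ τ (X τ) - ℓ τ (xp τ i)) ≤
        3 * G * D * Real.sqrt (Real.log T * ((t : ℝ) - (i : ℝ)))) ∧
      ((∑ τ ∈ Finset.Icc i t, ℓ τ (xp τ i)) -
            sInf ((fun x => ∑ τ ∈ Finset.Icc i t, ℓ τ x) '' K) ≤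
            3 * G * D * Real.sqrt ((t : ℝ) - (i : ℝ)) →
        (∑ τ ∈ Finset.Icc i t, ℓ τ (X τ)) -
            sInf ((fun x => ∑ τ ∈ Finset.Icc i t, ℓ τ x) '' K) ≤
            3 * G * D * Real.sqrt ((t : ℝ) - (i : ℝ)) +
              3 * G * D * Real.sqrt (Real.log T * ((t : ℝ) - (i : ℝ)))) := by
  have hGD : 0 < G * D := mul_pos hG hD
  have hi1 : 1 ≤ i := by
    have := hS_sub i (hactive i (by simp [hit]))
    simp at this; exact this
  have hlogT : 0 < Real.log T := Real.log_pos (by exact_mod_cast (by omega : 1 < T))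
  have hηpos : ∀ j, 0 < η j := fun j => by
    rw [hη j]
    have : 0 < Real.sqrt (Real.log T / l j) := Real.sqrt_pos.mpr (div_pos hlogT (hl j))
    have : 0 < min (1 / 2 : ℝ) (Real.sqrt (Real.log T / l j)) := lt_min (by norm_num) this
    positivity
  have hηle : ∀ j, η j * (G * D) ≤ 1 / 2 := fun j => by
    rw [hη j]
    have := min_le_left (1 / 2 : ℝ) (Real.sqrt (Real.log T / l j))
    calc _ = min (1 / 2 : ℝ) (Real.sqrt (Real.log T / l j)) := by field_simp
      _ ≤ _ := this
  -- one-step facts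
  have hstep : ∀ τ ∈ Finset.Icc 1 T, (∀ j ∈ S τ, 0 < w τ j) →
      (∀ j ∈ S τ, |η j * (ℓ τ (X τ) - ℓ τ (xp τ j))| ≤ 1 / 2) ∧
      ∑ j ∈ S τ, w τ j * (ℓ τ (X τ) - ℓ τ (xp τ j)) ≤ 0 := by
    intro τ hτ hw
    have hsum : 0 < ∑ j ∈ S τ, w τ j := Finset.sum_pos hw ⟨τ, hS_mem τ hτ⟩
    have hXc : X τ = (S τ).centerMass (w τ) (xp τ) := hX τ
    have hXK : X τ ∈ K := by
      rw [hXc]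
      exact hKconv.centerMass_mem (fun j hj => (hw j hj).le) hsum (hxp τ)
    refine ⟨fun j hj => ?_, ?_⟩
    · rw [abs_mul, abs_of_pos (hηpos j)]
      exact (mul_le_mul_of_nonneg_left (hℓosc τ hτ _ hXK _ (hxp τ j hj)) (hηpos j).le).trans (hηle j)
    · have hJ := (hℓconv τ hτ).map_centerMass_le (fun j hj => (hw j hj).le) hsum (hxp τ)
      rw [← hXc] at hJ
      simp only [Finset.centerMass, smul_eq_mul, Function.comp] at hJ
      rw [inv_mul_eq_div, le_div_iff₀ hsum] at hJ
      simp only [mul_sub, Finset.sum_sub_distrib, ← Finset.sum_mul]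
      linarith
  have hpot : ∀ τ, 1 ≤ τ → τ ≤ T →
      (∀ j ∈ S τ, 0 < w τ j) ∧ ∑ j ∈ S τ, w τ j / η j ≤ τ := by
    intro τ h1
    induction τ, h1 using Nat.le_induction with
    | base =>
      intro _
      rw [hS1]
      simp [hw_init, hηpos, (hηpos 1).ne']
    | succ τ h1 ih =>
      intro hτT
      obtain ⟨hw, hs⟩ := ih (by omega)
      obtain ⟨hr, hJ⟩ := hstep τ (by simp; omega) hw
      have hcase : ∀ j ∈ S (τ + 1), j = τ + 1 ∨ j ∈ S τ := fun j hj => by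
        have := hS_step τ hj
        simp at this; tauto
      have hnn : ∀ j ∈ S τ, 0 < w τ j * (1 + η j * (ℓ τ (X τ) - ℓ τ (xp τ j))) := fun j hj => by
        have := (abs_le.mp (hr j hj)).1
        exact mul_pos (hw j hj) (by linarith)
      refine ⟨fun j hj => ?_, ?_⟩
      · rcases hcase j hj with rfl | h
        · rw [hw_init]; exact hηpos _
        · rw [hw_rec τ j h hj]; exact hnn j h
      · have hmem : τ + 1 ∈ S (τ + 1) := hS_mem _ (by simp; omega)
        rw [← Finset.add_sum_erase _ _ hmem, hw_init, div_self (hηpos _).ne']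
        have hsub : (S (τ + 1)).erase (τ + 1) ⊆ S τ := fun j hj => by
          rw [Finset.mem_erase] at hj
          exact (hcase j hj.2).resolve_left hj.1
        have e1 : ∑ j ∈ (S (τ + 1)).erase (τ + 1), w (τ + 1) j / η j
            = ∑ j ∈ (S (τ + 1)).erase (τ + 1),
              w τ j * (1 + η j * (ℓ τ (X τ) - ℓ τ (xp τ j))) / η j :=
          Finset.sum_congr rfl fun j hj => by
            rw [hw_rec τ j (hsub hj) (Finset.mem_of_mem_erase hj)]
        have e2 := Finset.sum_le_sum_of_subset_of_nonneg (f := fun j =>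
              w τ j * (1 + η j * (ℓ τ (X τ) - ℓ τ (xp τ j))) / η j) hsub
              (fun j hj _ => (div_pos (hnn j hj) (hηpos j)).le)
        have e3 : ∑ j ∈ S τ, w τ j * (1 + η j * (ℓ τ (X τ) - ℓ τ (xp τ j))) / η j
            = ∑ j ∈ S τ, w τ j / η j + ∑ j ∈ S τ, w τ j * (ℓ τ (X τ) - ℓ τ (xp τ j)) := by
          rw [← Finset.sum_add_distrib]
          refine Finset.sum_congr rfl fun j _ => ?_
          have := (hηpos j).ne'
          field_simp
        push_cast
        linarith
  -- log lower bound for expert i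
  have hlow : ∀ s, i ≤ s → s ≤ t →
      ∑ τ ∈ Finset.Icc i s, (η i * (ℓ τ (X τ) - ℓ τ (xp τ i))) -
        (η i * (G * D)) ^ 2 * ((s : ℝ) - i + 1) ≤
      Real.log (w s i / η i * (1 + η i * (ℓ s (X s) - ℓ s (xp s i)))) := by
    have hone : ∀ s, i ≤ s → s ≤ t → |η i * (ℓ s (X s) - ℓ s (xp s i))| ≤ 1 / 2 ∧
        0 < w s i ∧
        η i * (ℓ s (X s) - ℓ s (xp s i)) - (η i * (G * D)) ^ 2 ≤
          Real.log (1 + η i * (ℓ s (X s) - ℓ s (xp s i))) := by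
      intro s h1 h2
      have hsT : s ∈ Finset.Icc 1 T := by simp; omega
      have hp := (hpot s (by omega) (by omega)).1
      have hiS := hactive s (by simp; omega)
      have hb := (hstep s hsT hp).1 i hiS
      refine ⟨hb, hp i hiS, ?_⟩
      have hl := aux_log _ hb
      have hXK : X s ∈ K := by
        rw [hX s]
        exact hKconv.centerMass_mem (fun j hj => (hp j hj).le)
          (Finset.sum_pos hp ⟨s, hS_mem s hsT⟩) (hxp s)
      have ho := hℓosc s hsT _ hXK _ (hxp s i hiS)
      have hsq : (η i * (ℓ s (X s) - ℓ s (xp s i))) ^ 2 ≤ (η i * (G * D)) ^ 2 := by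
        rw [mul_pow, mul_pow]
        exact mul_le_mul_of_nonneg_left (sq_le_sq' (abs_le.mp ho).1 (abs_le.mp ho).2) (sq_nonneg _)
      linarith
    intro s h1
    induction s, h1 using Nat.le_induction with
    | base =>
      intro h2
      rw [hw_init, div_self (hηpos i).ne']
      have := (hone i le_rfl h2).2.2
      simpa using this
    | succ s h1 ih =>
      intro h2
      have ih := ih (by omega)
      obtain ⟨a1, a2, a3⟩ := hone s h1 (by omega)
      obtain ⟨b1, b2, b3⟩ := hone (s + 1) (by omega) h2
      have hA := (abs_le.mp b1).1
      rw [Real.log_mul (div_pos b2 (hηpos i)).ne' (by linarith),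
        hw_rec s i (hactive s (by simp; omega)) (hactive (s + 1) (by simp; omega)),
        Finset.sum_Icc_succ_top (by omega), mul_div_right_comm]
      push_cast
      linarith
  have hlogle : Real.log (w t i / η i * (1 + η i * (ℓ t (X t) - ℓ t (xp t i)))) ≤ Real.log T := by
    obtain ⟨hp, hs⟩ := hpot t (by omega) (by omega)
    obtain ⟨hr, hJ⟩ := hstep t (by simp; omega) hp
    have hiS := hactive t (by simp; omega)
    have hnn : ∀ j ∈ S t, 0 < w t j / η j * (1 + η j * (ℓ t (X t) - ℓ t (xp t j))) := fun j hj => by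
      have := (abs_le.mp (hr j hj)).1
      exact mul_pos (div_pos (hp j hj) (hηpos j)) (by linarith)
    apply Real.log_le_log (hnn i hiS)
    have e1 := Finset.single_le_sum (fun j hj => (hnn j hj).le) hiS
    have e3 : ∑ j ∈ S t, w t j / η j * (1 + η j * (ℓ t (X t) - ℓ t (xp t j)))
            = ∑ j ∈ S t, w t j / η j + ∑ j ∈ S t, w t j * (ℓ t (X t) - ℓ t (xp t j)) := by
      rw [← Finset.sum_add_distrib]
      refine Finset.sum_congr rfl fun j _ => ?_
      have := (hηpos j).ne'
      field_simp
    have : (t : ℝ) ≤ T := by exact_mod_cast (by omega : t ≤ T)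
    linarith
  have hmain : ∑ τ ∈ Finset.Icc i t, (ℓ τ (X τ) - ℓ τ (xp τ i)) ≤
        3 * G * D * Real.sqrt (Real.log T * ((t : ℝ) - (i : ℝ))) := by
    have h := (hlow t hit le_rfl).trans hlogle
    rw [← Finset.mul_sum] at h
    have hn : (1 : ℝ) ≤ (t : ℝ) - i := by
      have h0 : (0 : ℝ) < (t : ℝ) - i := by linarith [hl i]
      have : i < t := by exact_mod_cast sub_pos.mp h0
      have : (i : ℝ) + 1 ≤ t := by exact_mod_cast this
      linarith
    have hf := aux_final _ _ hn hlife_lo hlife_hi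
    have hηi : η i * (G * D) = Real.sqrt (Real.log T / l i) := by
      rw [hη i, min_eq_right hη_small]; field_simp
    have hli := hl i
    generalize ∑ τ ∈ Finset.Icc i t, (ℓ τ (X τ) - ℓ τ (xp τ i)) = R at h ⊢
    generalize (t : ℝ) - i = n at *
    have hsq : (η i * (G * D)) ^ 2 = Real.log T / l i := by
      rw [hηi, Real.sq_sqrt (by positivity)]
    have hθ : 0 < η i * (G * D) := mul_pos (hηpos i) hGD
    have hLT : Real.log T = (η i * (G * D)) ^ 2 * l i := by rw [hsq]; field_simp
    generalize η i = e at *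
    generalize l i = L at *
    have hq : Real.sqrt (Real.log T * n) = e * (G * D) * Real.sqrt (L * n) := by
      rw [hLT, mul_assoc, Real.sqrt_mul (sq_nonneg _), Real.sqrt_sq hθ.le]
    rw [hq]
    have h6 : e * R ≤ (e * (G * D)) ^ 2 * (3 * Real.sqrt (L * n)) := by
      have := mul_le_mul_of_nonneg_left hf (sq_nonneg (e * (G * D)))
      linarith
    have he : 0 < e := pos_of_mul_pos_left hθ hGD.le
    refine le_of_mul_le_mul_left (h6.trans (le_of_eq ?_)) he
    ring
  refine ⟨hmain, fun h => ?_⟩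
  rw [Finset.sum_sub_distrib] at hmain
  linarith
end

section
/- Let n ≥ 1 and C₂ ≥ 1 be real numbers, let y ≥ 1 be real, and let x be a real number with 0 < x, x ≤ C₂·y^(1/n), and x ≤ y/2. Then (y − x)^(1 − 1/(2n)) + 2·√C₂·√x ≥ y^(1 − 1/(2n)). -/
/-- The induction-step inequality in the proof of Proposition 5.1 of the paper
(limits of the history-lookback technique). -/
theorem lookback_lower_bound_step (n C₂ : ℝ) (hn : 1 ≤ n) (hC₂ : 1 ≤ C₂)
    (y : ℝ) (hy : 1 ≤ y) (x : ℝ) (hx : 0 < x)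
    (hx₁ : x ≤ C₂ * y ^ (1 / n)) (hx₂ : x ≤ y / 2) :
    (y - x) ^ (1 - 1 / (2 * n)) + 2 * Real.sqrt C₂ * Real.sqrt x ≥
      y ^ (1 - 1 / (2 * n)) := by
  have hn0 : 0 < n := by linarith
  have hy0 : 0 < y := by linarith
  have hyx : 0 < y - x := by linarith
  have hp : 0 ≤ 1 / (2 * n) := by positivity
  rw [Real.rpow_sub hyx, Real.rpow_sub hy0, Real.rpow_one, Real.rpow_one]
  have hs : 0 < y ^ (1 / (2 * n)) := Real.rpow_pos_of_pos hy0 _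
  have ht : 0 < (y - x) ^ (1 / (2 * n)) := Real.rpow_pos_of_pos hyx _
  have hts : (y - x) ^ (1 / (2 * n)) ≤ y ^ (1 / (2 * n)) :=
    Real.rpow_le_rpow hyx.le (by linarith) hp
  have hsq : y ^ (1 / n) = y ^ (1 / (2 * n)) * y ^ (1 / (2 * n)) := by
    rw [← Real.rpow_add hy0]
    congr 1
    field_simp
    norm_num
  rw [hsq] at hx₁
  generalize y ^ (1 / (2 * n)) = s at *
  generalize (y - x) ^ (1 / (2 * n)) = t at *
  have h1 : (y - x) / s ≤ (y - x) / t := div_le_div_of_nonneg_left hyx.le ht hts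
  have h2 : √x ≤ √C₂ * s := by
    have h := Real.sqrt_le_sqrt hx₁
    rwa [Real.sqrt_mul (by linarith), Real.sqrt_mul_self hs.le] at h
  have h3 : x / s ≤ √C₂ * √x := by
    rw [div_le_iff₀ hs]
    nlinarith [Real.mul_self_sqrt hx.le, mul_le_mul_of_nonneg_left h2 (Real.sqrt_nonneg x)]
  have h4 : y / s = (y - x) / s + x / s := by ring
  have h5 : 0 ≤ √C₂ * √x := by positivity
  linarith
end

section
/- Let n ≥ 1 be an integer and C₁ > 0, C₂ ≥ 1 be real numbers. Let x : ℕ → ℕ satisfy, for every integer y ≥ 2: 1 ≤ x(y), x(y) ≤ C₂·y^(1/n), and x(y) ≤ y/2. Let R : ℕ → ℝ satisfy R(1) ≥ C₁ and, for every integer y ≥ 2, R(y) ≥ R(y − x(y)) + C₁·√(x(y)). Then for every integer y ≥ 1, R(y) ≥ (C₁/(2·√C₂))·y^(1 − 1/(2n)). -/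
/-- Proposition 5.1 of the paper (discretized): in the history-lookback
technique, sub-polynomially short tails force a nearly linear regret bound. -/
theorem lookback_lower_bound (n : ℕ) (hn : 1 ≤ n) (C₁ C₂ : ℝ)
    (hC₁ : 0 < C₁) (hC₂ : 1 ≤ C₂)
    (x : ℕ → ℕ)
    (hx₁ : ∀ y : ℕ, 2 ≤ y → 1 ≤ x y)
    (hx₂ : ∀ y : ℕ, 2 ≤ y → (x y : ℝ) ≤ C₂ * (y : ℝ) ^ (1 / (n : ℝ)))
    (hx₃ : ∀ y : ℕ, 2 ≤ y → (x y : ℝ) ≤ (y : ℝ) / 2)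
    (R : ℕ → ℝ)
    (hR₁ : C₁ ≤ R 1)
    (hRrec : ∀ y : ℕ, 2 ≤ y → R (y - x y) + C₁ * Real.sqrt (x y) ≤ R y) :
    ∀ y : ℕ, 1 ≤ y →
      C₁ / (2 * Real.sqrt C₂) * (y : ℝ) ^ (1 - 1 / (2 * (n : ℝ))) ≤ R y := by
  have hn' : (1 : ℝ) ≤ n := by exact_mod_cast hn
  have hb0 : 0 ≤ 1 / (2 * (n : ℝ)) := by positivity
  have hbb : 1 / (n : ℝ) = 1 / (2 * (n : ℝ)) + 1 / (2 * (n : ℝ)) := by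
    field_simp
    norm_num
  rw [hbb] at hx₂
  generalize 1 / (2 * (n : ℝ)) = b at *
  have hS : 1 ≤ Real.sqrt C₂ := Real.one_le_sqrt.mpr hC₂
  have hSS : Real.sqrt C₂ * Real.sqrt C₂ = C₂ := Real.mul_self_sqrt (by linarith)
  generalize Real.sqrt C₂ = S at *
  have hS0 : 0 < S := by linarith
  intro y
  induction y using Nat.strong_induction_on with
  | _ y ih =>
  intro hy
  rcases Nat.eq_or_lt_of_le hy with h1 | h2
  · subst h1
    simp only [Nat.cast_one, Real.one_rpow, mul_one]
    refine le_trans ?_ hR₁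
    rw [div_le_iff₀ (by positivity)]
    nlinarith
  · have h2 : 2 ≤ y := h2
    have hx1 := hx₁ y h2
    have hx2 := hx₂ y h2
    have hx3 := hx₃ y h2
    have hxy : 2 * x y ≤ y := by
      have : (2 : ℝ) * x y ≤ y := by linarith
      exact_mod_cast this
    have hr := hRrec y h2
    have hi := ih (y - x y) (by omega) (by omega)
    have hz : ((y - x y : ℕ) : ℝ) = y - x y := Nat.cast_sub (by omega)
    have hx0 : (1 : ℝ) ≤ x y := by exact_mod_cast hx1
    rw [hz] at hi
    have hy0 : (0 : ℝ) < y := by linarith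
    have hz0 : (0 : ℝ) < (y : ℝ) - x y := by linarith
    rw [Real.rpow_sub hz0, Real.rpow_one] at hi
    rw [Real.rpow_sub hy0, Real.rpow_one]
    rw [Real.rpow_add hy0] at hx2
    have hP : 0 < (y : ℝ) ^ b := Real.rpow_pos_of_pos hy0 b
    have hQ : 0 < ((y : ℝ) - x y) ^ b := Real.rpow_pos_of_pos hz0 b
    have hQP : ((y : ℝ) - x y) ^ b ≤ (y : ℝ) ^ b :=
      Real.rpow_le_rpow hz0.le (by linarith) hb0
    have hs0 := Real.sqrt_nonneg (x y : ℝ)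
    have hss : Real.sqrt (x y) * Real.sqrt (x y) = x y := Real.mul_self_sqrt (by linarith)
    have hs : Real.sqrt (x y) ≤ S * (y : ℝ) ^ b := by
      apply Real.sqrt_le_iff.mpr
      refine ⟨by positivity, ?_⟩
      calc (x y : ℝ) ≤ _ := hx2
        _ = _ := by rw [← hSS]; ring
    have hd : ((y : ℝ) - x y) / (y : ℝ) ^ b ≤ ((y : ℝ) - x y) / ((y : ℝ) - x y) ^ b :=
      div_le_div_of_nonneg_left hz0.le hQ hQP
    have hK : 0 < C₁ / (2 * S) := by positivity
    have e1 : (x y : ℝ) / (y : ℝ) ^ b ≤ S * Real.sqrt (x y) := by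
      rw [div_le_iff₀ hP]
      nlinarith [mul_le_mul_of_nonneg_left hs hs0]
    have e2 := mul_le_mul_of_nonneg_left hd hK.le
    have e3 := mul_le_mul_of_nonneg_left e1 hK.le
    have e4 : C₁ / (2 * S) * (S * Real.sqrt (x y)) = C₁ * Real.sqrt (x y) / 2 := by
      field_simp
    have e5 : 0 ≤ C₁ * Real.sqrt (x y) := by positivity
    rw [sub_div, mul_sub] at e2
    linarith
end

section
/- Let α and β be real numbers with 0 ≤ α ≤ 1/2 and α < β < 1. Then for every real y ≥ 1, y^β − (y − y^((1−β)/(1−α)))^β ≥ (β/2)·y^(α·(1−β)/(1−α)). -/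
/-- Property 1 of Proposition 5.2 of the paper: the recursion inequality for
tail length `x(y) = y^((1-β)/(1-α))`. -/
theorem lookback_tradeoff (α β : ℝ) (hα₀ : 0 ≤ α) (hα₁ : α ≤ 1 / 2)
    (hαβ : α < β) (hβ : β < 1) (y : ℝ) (hy : 1 ≤ y) :
    y ^ β - (y - y ^ ((1 - β) / (1 - α))) ^ β ≥
      β / 2 * y ^ (α * (1 - β) / (1 - α)) := by
  have h1 : 0 < 1 - α := by linarith
  have hy0 : 0 < y := by linarith
  set c := (1 - β) / (1 - α) with hc
  have hc1 : c ≤ 1 := by rw [hc, div_le_one h1]; linarith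
  have hcm : c * (1 - α) = 1 - β := by rw [hc]; field_simp
  have he : α * (1 - β) / (1 - α) = β + (c - 1) := by
    have : α * (1 - β) / (1 - α) = α * c := by rw [hc]; ring
    rw [this]; linarith
  rw [he, Real.rpow_add hy0]
  have ht : y ^ (c - 1) ≤ 1 := Real.rpow_le_one_of_one_le_of_nonpos hy (by linarith)
  have hyc : y - y ^ c = y * (1 + -y ^ (c - 1)) := by
    have : y ^ c = y * y ^ (c - 1) := by
      rw [Real.rpow_sub_one hy0.ne']; field_simp
    rw [this]; ring
  rw [hyc, Real.mul_rpow hy0.le (by linarith)]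
  have hb := rpow_one_add_le_one_add_mul_self (s := -y ^ (c - 1)) (by linarith)
    (p := β) (by linarith) hβ.le
  have hp : 0 < y ^ β := Real.rpow_pos_of_pos hy0 _
  have hq : 0 < y ^ (c - 1) := Real.rpow_pos_of_pos hy0 _
  have h2 := mul_le_mul_of_nonneg_left hb hp.le
  have h3 : 0 ≤ β * (y ^ β * y ^ (c - 1)) := mul_nonneg (by linarith) (by positivity)
  nlinarith
end

section
/- For every real x ≥ 1 and every real ε with 0 < ε < 1, one has x^(ε·(1+ε)) − (x^(1+ε) − x)^ε ≥ (ε/2)·x^(ε²), and in particular x^(ε·(1+ε)) − (x^(1+ε) − x)^ε ≥ ε/2. -/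
/-- The recursion inequality in the proof of Lemma 6.2 of the paper. -/
theorem eflh_expconcave_recursion (x : ℝ) (hx : 1 ≤ x) (ε : ℝ) (hε : 0 < ε)
    (hε' : ε < 1) :
    x ^ (ε * (1 + ε)) - (x ^ (1 + ε) - x) ^ ε ≥ ε / 2 * x ^ (ε ^ 2) ∧
      x ^ (ε * (1 + ε)) - (x ^ (1 + ε) - x) ^ ε ≥ ε / 2 := by
  have hx0 : 0 < x := by linarith
  have hy : 1 ≤ x ^ ε := Real.one_le_rpow hx hε.le
  have hz : 1 ≤ x ^ (ε ^ 2) := Real.one_le_rpow hx (by positivity)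
  have h1 : x ^ (ε * (1 + ε)) = x ^ ε * x ^ (ε ^ 2) := by
    rw [← Real.rpow_add hx0]; congr 1; ring
  have h2 : x ^ (1 + ε) - x = x * (x ^ ε * (1 + -(x ^ ε)⁻¹)) := by
    rw [Real.rpow_add hx0, Real.rpow_one]; field_simp; ring
  have h3 : (x ^ ε) ^ ε = x ^ (ε ^ 2) := by
    rw [← Real.rpow_mul hx0.le]; congr 1; ring
  have hi : (x ^ ε)⁻¹ ≤ 1 := inv_le_one_of_one_le₀ hy
  have hb : (1 + -(x ^ ε)⁻¹) ^ ε ≤ 1 + ε * -(x ^ ε)⁻¹ :=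
    rpow_one_add_le_one_add_mul_self (by linarith) hε.le hε'.le
  have h4 : (x ^ (1 + ε) - x) ^ ε = x ^ ε * (x ^ (ε ^ 2) * (1 + -(x ^ ε)⁻¹) ^ ε) := by
    rw [h2, Real.mul_rpow hx0.le (mul_nonneg (by linarith) (by linarith)),
      Real.mul_rpow (by linarith) (by linarith), h3]
  have h5 : (x ^ (1 + ε) - x) ^ ε ≤ x ^ ε * (x ^ (ε ^ 2) * (1 + ε * -(x ^ ε)⁻¹)) := by
    rw [h4]; gcongr
  have h6 : x ^ ε * (x ^ (ε ^ 2) * (1 + ε * -(x ^ ε)⁻¹))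
      = x ^ ε * x ^ (ε ^ 2) - ε * x ^ (ε ^ 2) := by
    have : x ^ ε ≠ 0 := by positivity
    field_simp
    ring
  have h7 : ε ≤ ε * x ^ (ε ^ 2) := le_mul_of_one_le_right hε.le hz
  constructor <;> linarith
end

section
/- For every real x ≥ 1 and every real ε with 0 < ε < 1, one has (1 − x^(−ε))^ε ≤ 1 − (ε/2)·x^(−ε). -/
/-- The key estimate in the recursion inequality of Lemma 6.2 of the paper. -/
theorem eflh_expconcave_estimate (x : ℝ) (hx : 1 ≤ x) (ε : ℝ) (hε : 0 < ε)
    (hε' : ε < 1) :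
    (1 - x ^ (-ε)) ^ ε ≤ 1 - ε / 2 * x ^ (-ε) := by
  have h0 : 0 ≤ x ^ (-ε) := Real.rpow_nonneg (by linarith) _
  have h1 : x ^ (-ε) ≤ 1 := Real.rpow_le_one_of_one_le_of_nonpos hx (by linarith)
  have h := rpow_one_add_le_one_add_mul_self (s := -(x ^ (-ε))) (by linarith) hε.le hε'.le
  rw [← sub_eq_add_neg] at h
  have h2 := mul_nonneg hε.le h0
  linarith
end

section
/- Let C > 0 be real and let R : ℕ → ℝ satisfy: R(1) ≤ C, and for every integer m ≥ 2 there exists an integer j with 1 ≤ j < m, m − j ≥ √m/2, and R(m) ≤ R(j) + 6·C·√(m − j). Then for every integer m ≥ 1, R(m) ≤ 36·C·m^(3/4). -/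
theorem eflh_aux (a b s : ℝ) (ha : 0 < a) (hb : 0 ≤ b) (hs : 0 ≤ s) (hab : b ≤ a)
    (h : a ^ 4 - b ^ 4 = s ^ 2) (h2 : a ^ 2 / 2 ≤ s ^ 2) : s ≤ 6 * (a ^ 3 - b ^ 3) := by
  have h1 : a / 2 ≤ s := by
    nlinarith
  have h3 : s ^ 2 ≤ 2 * (a * (a ^ 3 - b ^ 3)) := by
    have e : 2 * (a * (a ^ 3 - b ^ 3)) - (a ^ 4 - b ^ 4)
        = (a - b) * (a ^ 3 + a ^ 2 * b + a * b ^ 2 - b ^ 3) := by ring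
    have : 0 ≤ (a - b) * (a ^ 3 + a ^ 2 * b + a * b ^ 2 - b ^ 3) := by
      apply mul_nonneg (by linarith)
      have := pow_le_pow_left₀ hb hab 3
      have : 0 ≤ a ^ 2 * b + a * b ^ 2 := by positivity
      linarith
    linarith
  have h4 : a * s ≤ a * (6 * (a ^ 3 - b ^ 3)) := by nlinarith [mul_nonneg hs (sub_nonneg.2 h1)]
  exact le_of_mul_le_mul_left h4 ha

/-- The induction skeleton of Theorem 3.1 of the paper: the recursion
satisfied by the regret of EFLH yields the `36 C m^(3/4)` adaptive regret
bound. -/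
theorem eflh_regret_skeleton_basic (C : ℝ) (hC : 0 < C) (R : ℕ → ℝ)
    (hR₁ : R 1 ≤ C)
    (hRrec : ∀ m : ℕ, 2 ≤ m → ∃ j : ℕ, 1 ≤ j ∧ j < m ∧
      Real.sqrt m / 2 ≤ (m : ℝ) - (j : ℝ) ∧
      R m ≤ R j + 6 * C * Real.sqrt ((m : ℝ) - (j : ℝ))) :
    ∀ m : ℕ, 1 ≤ m → R m ≤ 36 * C * (m : ℝ) ^ ((3 : ℝ) / 4) := by
  have key : ∀ n : ℕ, ((n : ℝ) ^ ((1 : ℝ) / 4)) ^ 4 = n ∧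
      ((n : ℝ) ^ ((1 : ℝ) / 4)) ^ 3 = (n : ℝ) ^ ((3 : ℝ) / 4) ∧
      ((n : ℝ) ^ ((1 : ℝ) / 4)) ^ 2 = Real.sqrt n := by
    intro n
    have hn : (0 : ℝ) ≤ n := n.cast_nonneg
    refine ⟨?_, ?_, ?_⟩
    · rw [← Real.rpow_natCast, ← Real.rpow_mul hn]; norm_num
    · rw [← Real.rpow_natCast, ← Real.rpow_mul hn]; norm_num
    · rw [← Real.rpow_natCast, ← Real.rpow_mul hn, Real.sqrt_eq_rpow]; norm_num
  intro m
  induction m using Nat.strong_induction_on with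
  | _ m ih =>
    intro hm
    rcases Nat.lt_or_ge m 2 with h | h
    · obtain rfl : m = 1 := by omega
      simp only [Nat.cast_one, Real.one_rpow]
      linarith
    · obtain ⟨j, hj1, hjm, hd, hR⟩ := hRrec m h
      have ihj := ih j hjm hj1
      have hjm' : (j : ℝ) ≤ m := by exact_mod_cast hjm.le
      have hm0 : (0 : ℝ) < m := by exact_mod_cast hm
      have hsq := Real.sq_sqrt (sub_nonneg.2 hjm')
      have := eflh_aux ((m : ℝ) ^ ((1 : ℝ) / 4)) ((j : ℝ) ^ ((1 : ℝ) / 4))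
        (Real.sqrt ((m : ℝ) - j)) (by positivity) (by positivity) (by positivity)
        (Real.rpow_le_rpow (by positivity) hjm' (by norm_num))
        (by rw [(key m).1, (key j).1, hsq]) (by rw [(key m).2.2, hsq]; exact hd)
      rw [(key m).2.1, (key j).2.1] at this
      have := mul_le_mul_of_nonneg_left this (by positivity : 0 ≤ 6 * C)
      linarith
end

section
/- Let 0 < ε < 1/2 and C > 0 be reals, and let R : ℕ → ℝ satisfy: R(1) ≤ C, and for every integer m ≥ 2 there exists an integer j with 1 ≤ j < m, m − j ≥ m^(1−ε)/2, and R(m) ≤ R(j) + 6·C·√(m − j). Then for every integer m ≥ 1, R(m) ≤ 48·C·m^((1+ε)/2). -/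
theorem eflh_step_aux (ε x y : ℝ) (hε : 0 < ε) (hε' : ε < 1 / 2) (hy : 0 < y) (hyx : y < x)
    (h : x ^ (1 - ε) / 2 ≤ x - y) :
    48 * y ^ ((1 + ε) / 2) + 6 * Real.sqrt (x - y) ≤ 48 * x ^ ((1 + ε) / 2) := by
  have hx : 0 < x := hy.trans hyx
  have hd : 0 < x - y := by linarith
  set Q := x ^ ((1 - ε) / 2) with hQ
  have hQ0 : 0 < Q := Real.rpow_pos_of_pos hx _
  have hQ2 : Q * Q = x ^ (1 - ε) := by
    rw [hQ, ← Real.rpow_add hx]; congr 1; ring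
  set P := x ^ ((1 + ε) / 2) with hP
  have hP0 : 0 < P := Real.rpow_pos_of_pos hx _
  have hPQ : P * Q = x := by
    rw [hP, hQ, ← Real.rpow_add hx]
    conv_rhs => rw [← Real.rpow_one x]
    congr 1; ring
  have hs0 : 0 < Real.sqrt (x - y) := Real.sqrt_pos.2 hd
  have hs2 := Real.mul_self_sqrt hd.le
  set s := Real.sqrt (x - y)
  have hb := rpow_one_add_le_one_add_mul_self (s := -((x - y) / x))
    (by rw [neg_le_neg_iff, div_le_one hx]; linarith) (p := (1 + ε) / 2) (by linarith) (by linarith)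
  have e1 : 1 + -((x - y) / x) = y / x := by field_simp; ring
  rw [e1, Real.div_rpow hy.le hx.le, ← hP, div_le_iff₀ hP0] at hb
  have e2 : (1 + (1 + ε) / 2 * -((x - y) / x)) * P = P - (1 + ε) / 2 * (s * s / Q) := by
    rw [hs2]
    have : (x - y) / x * P = (x - y) / Q := by
      rw [div_mul_eq_mul_div, div_eq_div_iff hx.ne' hQ0.ne', mul_assoc, hPQ]
    linear_combination (-(1 + ε) / 2) * this
  rw [e2] at hb
  have hQs : Q ≤ 4 * s := by nlinarith
  have h3 : s / 4 ≤ s * s / Q := by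
    rw [le_div_iff₀ hQ0]; nlinarith
  nlinarith

/-- The induction skeleton of Theorem 4.1 of the paper: the recursion
satisfied by the regret of the full EFLH algorithm yields the
`48 C m^((1+ε)/2)` adaptive regret bound. -/
theorem eflh_regret_skeleton_general (ε : ℝ) (hε : 0 < ε) (hε' : ε < 1 / 2)
    (C : ℝ) (hC : 0 < C) (R : ℕ → ℝ)
    (hR₁ : R 1 ≤ C)
    (hRrec : ∀ m : ℕ, 2 ≤ m → ∃ j : ℕ, 1 ≤ j ∧ j < m ∧
      (m : ℝ) ^ (1 - ε) / 2 ≤ (m : ℝ) - (j : ℝ) ∧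
      R m ≤ R j + 6 * C * Real.sqrt ((m : ℝ) - (j : ℝ))) :
    ∀ m : ℕ, 1 ≤ m → R m ≤ 48 * C * (m : ℝ) ^ ((1 + ε) / 2) := by
  intro m
  induction m using Nat.strong_induction_on with
  | _ m ih =>
    intro hm
    rcases hm.eq_or_lt with rfl | hm2
    · simp only [Nat.cast_one, Real.one_rpow]; linarith
    · obtain ⟨j, hj1, hjm, hd, hr⟩ := hRrec m hm2
      have h1 := ih j hjm hj1
      have h2 := eflh_step_aux ε m j hε hε' (by exact_mod_cast hj1) (by exact_mod_cast hjm) hd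
      have h3 := mul_le_mul_of_nonneg_left h2 hC.le
      linarith
end

section
/- Under the Algorithm-3 exponential-weights setup, let j be an expert that enters at round s with initial weight w_s^{(j)} = 1/s (where 2 ≤ s), and suppose j belongs to S_τ for every τ ∈ {s, …, t} with t ≤ T. Then ∑_{τ=s}^{t} (ℓ_τ(x_τ) − ℓ_τ(x_τ^{(j)})) ≤ (2/α)·(log(t − s + 1) + log T). -/
/-- The multiplicative-weights regret bound `(2/α)(log I + log T)` for the
exp-concave version of EFLH (Algorithm 3), proved in the appendix of the
paper and used in Lemma 6.2. -/
theorem eflh_expconcave_mw_regret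
    (d T : ℕ) (hT : 2 ≤ T) (α : ℝ) (hα : 0 < α)
    (K : Set (EuclideanSpace ℝ (Fin d))) (hK : Convex ℝ K)
    (ℓ : ℕ → EuclideanSpace ℝ (Fin d) → ℝ)
    (hℓ : ∀ τ ∈ Finset.Icc 1 T, ConcaveOn ℝ K (fun x => Real.exp (-α * ℓ τ x)))
    -- active expert sets
    (S : ℕ → Finset ℕ)
    (hS_ne : ∀ τ, (S τ).Nonempty)
    (hS_new : ∀ τ : ℕ, τ + 1 ∈ S (τ + 1))
    (hS_step : ∀ τ : ℕ, S (τ + 1) ⊆ S τ ∪ {τ + 1})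
    -- expert predictions
    (xp : ℕ → ℕ → EuclideanSpace ℝ (Fin d))
    (hxp : ∀ τ, ∀ j ∈ S τ, xp τ j ∈ K)
    -- weights
    (w : ℕ → ℕ → ℝ)
    (hw_nonneg : ∀ τ, ∀ j ∈ S τ, 0 ≤ w τ j)
    (hw_sum : ∀ τ, ∑ j ∈ S τ, w τ j = 1)
    (hw_new : ∀ τ : ℕ, w (τ + 1) (τ + 1) = 1 / ((τ : ℝ) + 1))
    (hw_rec : ∀ τ : ℕ, ∀ j ∈ S τ, j ∈ S (τ + 1) → j ≠ τ + 1 →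
      w (τ + 1) j = (1 - 1 / ((τ : ℝ) + 1)) *
        (w τ j * Real.exp (-α * ℓ τ (xp τ j)) /
          ∑ i ∈ S τ, w τ i * Real.exp (-α * ℓ τ (xp τ i))))
    -- played points
    (X : ℕ → EuclideanSpace ℝ (Fin d))
    (hX : ∀ τ, X τ = ∑ j ∈ S τ, w τ j • xp τ j)
    -- the expert j entering at round s, alive throughout [s, t]
    (s t j : ℕ) (hs : 2 ≤ s) (hst : s ≤ t) (htT : t ≤ T)
    (hw_enter : w s j = 1 / (s : ℝ))
    (hactive : ∀ τ ∈ Finset.Icc s t, j ∈ S τ) :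
    ∑ τ ∈ Finset.Icc s t, (ℓ τ (X τ) - ℓ τ (xp τ j)) ≤
      2 / α * (Real.log ((t : ℝ) - (s : ℝ) + 1) + Real.log T) := by
  -- normalisers
  set Z : ℕ → ℝ := fun τ => ∑ i ∈ S τ, w τ i * Real.exp (-α * ℓ τ (xp τ i)) with hZdef
  have hZpos : ∀ τ, 0 < Z τ := by
    intro τ
    have hnn : ∀ i ∈ S τ, 0 ≤ w τ i * Real.exp (-α * ℓ τ (xp τ i)) := fun i hi =>
      mul_nonneg (hw_nonneg τ i hi) (Real.exp_pos _).le
    refine lt_of_le_of_ne (Finset.sum_nonneg hnn) ?_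
    intro h0
    have h1 := (Finset.sum_eq_zero_iff_of_nonneg hnn).1 h0.symm
    have h2 : ∑ i ∈ S τ, w τ i = 0 := Finset.sum_eq_zero fun i hi =>
      (mul_eq_zero.1 (h1 i hi)).resolve_right (Real.exp_pos _).ne'
    rw [hw_sum] at h2
    exact one_ne_zero h2
  have hjensen : ∀ τ, 1 ≤ τ → τ ≤ T → Z τ ≤ Real.exp (-α * ℓ τ (X τ)) := by
    intro τ h1 h2
    have h := (hℓ τ (Finset.mem_Icc.2 ⟨h1, h2⟩)).le_map_sum (hw_nonneg τ) (hw_sum τ) (hxp τ)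
    rw [hX]
    simpa [hZdef, smul_eq_mul] using h
  have hstep : ∀ τ, 1 ≤ τ → τ ≤ T → Real.exp (α * (ℓ τ (X τ) - ℓ τ (xp τ j))) ≤
      Real.exp (-α * ℓ τ (xp τ j)) / Z τ := by
    intro τ h1 h2
    rw [le_div_iff₀ (hZpos τ)]
    calc _ ≤ Real.exp (α * (ℓ τ (X τ) - ℓ τ (xp τ j))) * Real.exp (-α * ℓ τ (X τ)) :=
          mul_le_mul_of_nonneg_left (hjensen τ h1 h2) (Real.exp_pos _).le
      _ = _ := by rw [← Real.exp_add]; congr 1; ring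
  -- invariant on a reset-free interval
  have hinv : ∀ a b : ℕ, 1 ≤ a → a ≤ b → w a j = 1 / (a : ℝ) → b ≤ T →
      (∀ τ, a ≤ τ → τ ≤ b → j ∈ S τ) → (∀ τ, a < τ → τ ≤ b → j ≠ τ) →
      Real.exp (α * ∑ τ ∈ Finset.Ico a b, (ℓ τ (X τ) - ℓ τ (xp τ j))) ≤ b * w b j := by
    intro a b ha hab hwa
    induction b, hab using Nat.le_induction with
    | base =>
      intro _ _ _
      have : (a : ℝ) ≠ 0 := by positivity
      rw [hwa]; simp [this]
    | succ b hab ih =>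
      intro hbT hact hne
      have ih' := ih (by omega) (fun τ h1 h2 => hact τ h1 (by omega))
        (fun τ h1 h2 => hne τ h1 (by omega))
      have hr := hw_rec b j (hact b hab (by omega)) (hact (b+1) (by omega) le_rfl)
        (hne (b+1) (by omega) le_rfl)
      have hs' := hstep b (by omega) (by omega)
      have hb : (0 : ℝ) < b := by exact_mod_cast (by omega : 0 < b)
      have heq : ((b + 1 : ℕ) : ℝ) * w (b + 1) j =
          (b * w b j) * (Real.exp (-α * ℓ b (xp b j)) / Z b) := by
        rw [hr]
        have hz := (hZpos b).ne'
        change ((b + 1 : ℕ) : ℝ) * ((1 - 1 / ((b : ℝ) + 1)) *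
          (w b j * Real.exp (-α * ℓ b (xp b j)) / Z b)) = _
        push_cast
        have hb1 : (b : ℝ) + 1 ≠ 0 := by positivity
        have : ((b : ℝ) + 1) * (1 - 1 / ((b : ℝ) + 1)) = b := by field_simp <;> ring
        rw [← mul_assoc, this]; ring
      rw [heq, Finset.sum_Ico_succ_top hab, mul_add, Real.exp_add]
      exact mul_le_mul ih' hs' (Real.exp_pos _).le ((Real.exp_pos _).le.trans ih')
  have hmain : ∀ a b : ℕ, 1 ≤ a → a ≤ b → w a j = 1 / (a : ℝ) → b ≤ T →
      (∀ τ, a ≤ τ → τ ≤ b → j ∈ S τ) → (∀ τ, a < τ → τ ≤ b → j ≠ τ) →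
      α * ∑ τ ∈ Finset.Ico a (b + 1), (ℓ τ (X τ) - ℓ τ (xp τ j)) ≤ Real.log T := by
    intro a b ha hab hwa hbT hact hne
    have h1 := hinv a b ha hab hwa hbT hact hne
    have h2 := hstep b (by omega) hbT
    have hjS := hact b hab le_rfl
    have hle : w b j * Real.exp (-α * ℓ b (xp b j)) ≤ Z b :=
      Finset.single_le_sum (f := fun i => w b i * Real.exp (-α * ℓ b (xp b i)))
        (fun i hi => mul_nonneg (hw_nonneg b i hi) (Real.exp_pos _).le) hjS
    have hT0 : (0 : ℝ) < T := by exact_mod_cast (by omega : 0 < T)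
    rw [Real.le_log_iff_exp_le hT0, Finset.sum_Ico_succ_top hab, mul_add, Real.exp_add]
    calc _ ≤ (b * w b j) * (Real.exp (-α * ℓ b (xp b j)) / Z b) :=
          mul_le_mul h1 h2 (Real.exp_pos _).le ((Real.exp_pos _).le.trans h1)
      _ = b * ((w b j * Real.exp (-α * ℓ b (xp b j))) / Z b) := by ring
      _ ≤ b * 1 := mul_le_mul_of_nonneg_left ((div_le_one (hZpos b)).2 hle) (Nat.cast_nonneg b)
      _ ≤ T := by rw [mul_one]; exact_mod_cast hbT
  have hlogT : 0 ≤ Real.log T := Real.log_natCast_nonneg T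
  have hlogI : 0 ≤ Real.log ((t : ℝ) - (s : ℝ) + 1) := by
    apply Real.log_nonneg
    have : (s : ℝ) ≤ t := by exact_mod_cast hst
    linarith
  have hact : ∀ τ, s ≤ τ → τ ≤ t → j ∈ S τ := fun τ h1 h2 =>
    hactive τ (Finset.mem_Icc.2 ⟨h1, h2⟩)
  have hIcc : Finset.Icc s t = Finset.Ico s (t + 1) := by ext x; simp only [Finset.mem_Icc, Finset.mem_Ico]; omega
  have key : α * ∑ τ ∈ Finset.Icc s t, (ℓ τ (X τ) - ℓ τ (xp τ j)) ≤ 2 * Real.log T := by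
    rw [hIcc]
    by_cases hj : s < j ∧ j ≤ t
    · obtain ⟨hj1, hj2⟩ := hj
      obtain ⟨m, rfl⟩ : ∃ m, j = m + 1 := ⟨j - 1, by omega⟩
      have hA := hmain s m (by omega) (by omega) hw_enter (by omega)
        (fun τ h1 h2 => hact τ h1 (by omega)) (fun τ h1 h2 => by omega)
      have hB := hmain (m + 1) t (by omega) hj2 (by rw [hw_new]; push_cast; rfl) htT
        (fun τ h1 h2 => hact τ (by omega) h2) (fun τ h1 h2 => by omega)
      rw [← Finset.sum_Ico_consecutive _ hj1.le (by omega : m + 1 ≤ t + 1), mul_add]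
      linarith
    · have hA := hmain s t (by omega) hst hw_enter htT hact (fun τ h1 h2 => by omega)
      linarith
  rw [div_mul_eq_mul_div, le_div_iff₀ hα]
  linarith
end
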